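/- In a braided quantum group, the pentagonal twisting relation (φ⊗id)σ = (id⊗τ)(σ⊗id)(id⊗φ) holds, where τ is the secondary braiding. -/

import Mathlib

open TensorProduct LinearMap

noncomputable section

variable (A : Type*) [Ring A] [Algebra ℂ A]

/-- Two-fold tensor product of `A` with itself. -/
abbrev T2 := A ⊗[ℂ] A
/-- Three-fold tensor product (right associated). -/
abbrev T3 := A ⊗[ℂ] (A ⊗[ℂ] A)
/-- Four-fold tensor product (right associated). -/
abbrev T4 := A ⊗[ℂ] (A ⊗[ℂ] (A ⊗[ℂ] A))

variable {A}

/-- The multiplication of `A` as a linear map. -/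
def mA : T2 A →ₗ[ℂ] A := LinearMap.mul' ℂ A

/-- `f ⊗ id` : a map of `T2` acting on the factors 1,2 of `T3`. -/
def op12 (f : T2 A →ₗ[ℂ] T2 A) : T3 A →ₗ[ℂ] T3 A :=
  (TensorProduct.assoc ℂ A A A).toLinearMap ∘ₗ f.rTensor A ∘ₗ
    (TensorProduct.assoc ℂ A A A).symm.toLinearMap

/-- `id ⊗ f` : a map of `T2` acting on the factors 2,3 of `T3`. -/
def op23 (f : T2 A →ₗ[ℂ] T2 A) : T3 A →ₗ[ℂ] T3 A := f.lTensor A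

/-- `f ⊗ id ⊗ id` : a map of `T2` acting on the factors 1,2 of `T4`. -/
def op12_4 (f : T2 A →ₗ[ℂ] T2 A) : T4 A →ₗ[ℂ] T4 A :=
  (TensorProduct.assoc ℂ A A (T2 A)).toLinearMap ∘ₗ f.rTensor (T2 A) ∘ₗ
    (TensorProduct.assoc ℂ A A (T2 A)).symm.toLinearMap

/-- `id ⊗ f ⊗ id` : a map of `T2` acting on the factors 2,3 of `T4`. -/
def op23_4 (f : T2 A →ₗ[ℂ] T2 A) : T4 A →ₗ[ℂ] T4 A := (op12 f).lTensor A

/-- `id ⊗ id ⊗ f` : a map of `T2` acting on the factors 3,4 of `T4`. -/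
def op34_4 (f : T2 A →ₗ[ℂ] T2 A) : T4 A →ₗ[ℂ] T4 A := (f.lTensor A).lTensor A

/-- `m ⊗ id : T3 → T2`. -/
def m12 : T3 A →ₗ[ℂ] T2 A :=
  (mA (A := A)).rTensor A ∘ₗ (TensorProduct.assoc ℂ A A A).symm.toLinearMap

/-- `id ⊗ m : T3 → T2`. -/
def m23 : T3 A →ₗ[ℂ] T2 A := (mA (A := A)).lTensor A

/-- `m ⊗ m : T4 → T2`. -/
def mm : T4 A →ₗ[ℂ] T2 A := m12 ∘ₗ ((mA (A := A)).lTensor A).lTensor A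

/-- A braided quantum group structure on the algebra `A` (Đurđević).
`φ` is the coproduct, `ε` the counit, `κ` the antipode, `σ` the braiding
(with given inverse `σ'`). -/
structure BQG (A : Type*) [Ring A] [Algebra ℂ A] where
  φ : A →ₗ[ℂ] T2 A
  ε : A →ₗ[ℂ] ℂ
  κ : A →ₗ[ℂ] A
  σ : T2 A →ₗ[ℂ] T2 A
  σ' : T2 A →ₗ[ℂ] T2 A
  σ_comp : σ ∘ₗ σ' = LinearMap.id
  comp_σ : σ' ∘ₗ σ = LinearMap.id
  κ_bij : Function.Bijective κ
  /-- coassociativity `(φ⊗id)φ = (id⊗φ)φ` -/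
  coassoc : (TensorProduct.assoc ℂ A A A).toLinearMap ∘ₗ φ.rTensor A ∘ₗ φ = φ.lTensor A ∘ₗ φ
  /-- `(ε⊗id)φ = id` -/
  counit_left : (TensorProduct.lid ℂ A).toLinearMap ∘ₗ ε.rTensor A ∘ₗ φ = LinearMap.id
  /-- `(id⊗ε)φ = id` -/
  counit_right : (TensorProduct.rid ℂ A).toLinearMap ∘ₗ ε.lTensor A ∘ₗ φ = LinearMap.id
  /-- `σ(m⊗id) = (id⊗m)(σ⊗id)(id⊗σ)` -/
  braid_mul_left : σ ∘ₗ m12 = m23 ∘ₗ op12 σ ∘ₗ op23 σ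
  /-- `σ(id⊗m) = (m⊗id)(id⊗σ)(σ⊗id)` -/
  braid_mul_right : σ ∘ₗ m23 = m12 ∘ₗ op23 σ ∘ₗ op12 σ
  /-- `φm = (m⊗m)(id⊗σ⊗id)(φ⊗φ)` -/
  comul_mul : φ ∘ₗ mA = mm ∘ₗ op23_4 σ ∘ₗ
      (TensorProduct.assoc ℂ A A (T2 A)).toLinearMap ∘ₗ φ.rTensor (T2 A) ∘ₗ φ.lTensor A
  /-- `(σ⊗id²)(id⊗φ⊗id)(σ⁻¹⊗id)(id⊗φ) = (id²⊗σ)(id⊗φ⊗id)(id⊗σ⁻¹)(φ⊗id)` -/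
  mixed_coassoc :
    op12_4 σ ∘ₗ ((TensorProduct.assoc ℂ A A A).toLinearMap ∘ₗ φ.rTensor A).lTensor A ∘ₗ
        op12 σ' ∘ₗ φ.lTensor A
      = op34_4 σ ∘ₗ ((TensorProduct.assoc ℂ A A A).toLinearMap ∘ₗ φ.rTensor A).lTensor A ∘ₗ
        op23 σ' ∘ₗ (TensorProduct.assoc ℂ A A A).toLinearMap ∘ₗ φ.rTensor A
  /-- `m(κ⊗id)φ = 1ε` -/
  antipode_left : mA ∘ₗ κ.rTensor A ∘ₗ φ = Algebra.linearMap ℂ A ∘ₗ ε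
  /-- `m(id⊗κ)φ = 1ε` -/
  antipode_right : mA ∘ₗ κ.lTensor A ∘ₗ φ = Algebra.linearMap ℂ A ∘ₗ ε

namespace BQG

variable {A : Type*} [Ring A] [Algebra ℂ A] (G : BQG A)

/-- `φ ⊗ id : T2 → T3`. -/
def φ1 : T2 A →ₗ[ℂ] T3 A := (TensorProduct.assoc ℂ A A A).toLinearMap ∘ₗ G.φ.rTensor A

/-- `id ⊗ φ : T2 → T3`. -/
def φ2 : T2 A →ₗ[ℂ] T3 A := G.φ.lTensor A

/-- `id² ⊗ ε : T3 → T2`. -/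
def ε3r : T3 A →ₗ[ℂ] T2 A :=
  ((TensorProduct.rid ℂ A).toLinearMap ∘ₗ G.ε.lTensor A).lTensor A

/-- `ε ⊗ id² : T3 → T2`. -/
def ε3l : T3 A →ₗ[ℂ] T2 A :=
  (TensorProduct.lid ℂ (T2 A)).toLinearMap ∘ₗ G.ε.rTensor (T2 A)

/-- The secondary braiding `τ = (id²⊗ε)(id⊗σ⁻¹)(φ⊗id)σ`. -/
def τ : T2 A →ₗ[ℂ] T2 A := G.ε3r ∘ₗ op23 G.σ' ∘ₗ G.φ1 ∘ₗ G.σ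

/-- `ε ⊗ ε : T2 → ℂ`. -/
def εε : T2 A →ₗ[ℂ] ℂ :=
  (TensorProduct.lid ℂ ℂ).toLinearMap ∘ₗ G.ε.rTensor ℂ ∘ₗ G.ε.lTensor A

end BQG


namespace BQGaux

universe u v w z

variable {A : Type u} [Ring A] [Algebra ℂ A]

/-- `id ⊗ g` -/
abbrev lt {X : Type v} {Y : Type w} [AddCommMonoid X] [Module ℂ X] [AddCommMonoid Y] [Module ℂ Y]
    (g : X →ₗ[ℂ] Y) : (A ⊗[ℂ] X) →ₗ[ℂ] (A ⊗[ℂ] Y) := g.lTensor A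

section ops
variable (X : Type v) [AddCommMonoid X] [Module ℂ X]

def D (f : T2 A →ₗ[ℂ] T2 A) : (A ⊗[ℂ] (A ⊗[ℂ] X)) →ₗ[ℂ] (A ⊗[ℂ] (A ⊗[ℂ] X)) :=
  (TensorProduct.assoc ℂ A A X).toLinearMap ∘ₗ f.rTensor X ∘ₗ
    (TensorProduct.assoc ℂ A A X).symm.toLinearMap

def Ph (f : A →ₗ[ℂ] T2 A) : (A ⊗[ℂ] X) →ₗ[ℂ] (A ⊗[ℂ] (A ⊗[ℂ] X)) :=
  (TensorProduct.assoc ℂ A A X).toLinearMap ∘ₗ f.rTensor X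

def Ep (f : A →ₗ[ℂ] ℂ) : (A ⊗[ℂ] X) →ₗ[ℂ] X :=
  (TensorProduct.lid ℂ X).toLinearMap ∘ₗ f.rTensor X

def Mu : (A ⊗[ℂ] (A ⊗[ℂ] X)) →ₗ[ℂ] (A ⊗[ℂ] X) :=
  (mA (A := A)).rTensor X ∘ₗ (TensorProduct.assoc ℂ A A X).symm.toLinearMap

def Ka (f : A →ₗ[ℂ] A) : (A ⊗[ℂ] X) →ₗ[ℂ] (A ⊗[ℂ] X) := f.rTensor X

def Et : X →ₗ[ℂ] (A ⊗[ℂ] X) := TensorProduct.mk ℂ A X 1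

end ops

section nat
variable {X : Type v} [AddCommMonoid X] [Module ℂ X] {Y : Type w} [AddCommMonoid Y] [Module ℂ Y]
  {Z : Type z} [AddCommMonoid Z] [Module ℂ Z]

theorem lt_comp (g : Y →ₗ[ℂ] Z) (f : X →ₗ[ℂ] Y) (x : A ⊗[ℂ] X) :
    lt g (lt f x) = lt (A := A) (g ∘ₗ f) x := by
  simp [lt, LinearMap.lTensor_comp]

theorem assoc_nat (g : X →ₗ[ℂ] Y) (x : (A ⊗[ℂ] A) ⊗[ℂ] X) :
    TensorProduct.assoc ℂ A A Y (g.lTensor (A ⊗[ℂ] A) x)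
      = lt (lt g) (TensorProduct.assoc ℂ A A X x) := by
  have : (TensorProduct.assoc ℂ A A Y).toLinearMap ∘ₗ (g.lTensor (A ⊗[ℂ] A))
      = lt (lt g) ∘ₗ (TensorProduct.assoc ℂ A A X).toLinearMap := by
    ext; simp
  exact LinearMap.congr_fun this x

theorem D_nat (f : T2 A →ₗ[ℂ] T2 A) (g : X →ₗ[ℂ] Y) (x) :
    D Y f (lt (lt g) x) = lt (lt g) (D X f x) := by
  have : D Y f ∘ₗ lt (lt g) = lt (lt g) ∘ₗ D X f := by
    ext a b x
    simp [D, ← assoc_nat]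
  exact LinearMap.congr_fun this x

theorem Ph_nat (f : A →ₗ[ℂ] T2 A) (g : X →ₗ[ℂ] Y) (x) :
    Ph Y f (lt g x) = lt (lt g) (Ph X f x) := by
  have : Ph Y f ∘ₗ lt g = lt (lt g) ∘ₗ Ph X f := by
    ext a x
    simp [Ph, ← assoc_nat]
  exact LinearMap.congr_fun this x

theorem Ep_nat (f : A →ₗ[ℂ] ℂ) (g : X →ₗ[ℂ] Y) (x) :
    Ep Y f (lt g x) = g (Ep X f x) := by
  have : Ep Y f ∘ₗ lt g = g ∘ₗ Ep X f := by
    ext a x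
    simp [Ep]
  exact LinearMap.congr_fun this x

theorem Mu_nat (g : X →ₗ[ℂ] Y) (x) :
    Mu (A := A) Y (lt (lt g) x) = lt g (Mu X x) := by
  have : Mu (A := A) Y ∘ₗ lt (lt g) = lt g ∘ₗ Mu X := by
    ext a b x
    simp [Mu]
  exact LinearMap.congr_fun this x

theorem Ka_nat (f : A →ₗ[ℂ] A) (g : X →ₗ[ℂ] Y) (x) :
    Ka Y f (lt g x) = lt g (Ka X f x) := by
  have : Ka Y f ∘ₗ lt g = lt g ∘ₗ Ka X f := by
    ext a x
    simp [Ka]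
  exact LinearMap.congr_fun this x

theorem Et_nat (g : X →ₗ[ℂ] Y) (x) :
    lt g (Et (A := A) X x) = Et Y (g x) := by
  simp [Et]

theorem Mu_Et (x : A ⊗[ℂ] X) : Mu X (Et (A := A) _ x) = x := by
  have : Mu X ∘ₗ Et (A := A) _ = LinearMap.id := by
    ext a x
    simp [Mu, Et, mA]
  exact LinearMap.congr_fun this x

theorem Mu_lt_Et (x : A ⊗[ℂ] X) : Mu X (lt (Et (A := A) _) x) = x := by
  have : Mu X ∘ₗ lt (Et (A := A) _) = LinearMap.id := by
    ext a x
    simp [Mu, Et, mA]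
  exact LinearMap.congr_fun this x

theorem Mu_assoc (x : A ⊗[ℂ] (A ⊗[ℂ] (A ⊗[ℂ] X))) :
    Mu X (lt (Mu X) x) = Mu X (Mu _ x) := by
  have : Mu X ∘ₗ lt (Mu (A := A) X) = Mu X ∘ₗ Mu _ := by
    ext a x
    simp [Mu, mA, mul_assoc]
  exact LinearMap.congr_fun this x

end nat

section conv
variable (X : Type v) [AddCommMonoid X] [Module ℂ X]

/-- reassociation of three factors with a tail -/
def J3 : (T3 A) ⊗[ℂ] X →ₗ[ℂ] A ⊗[ℂ] (A ⊗[ℂ] (A ⊗[ℂ] X)) :=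
  lt (TensorProduct.assoc ℂ A A X).toLinearMap ∘ₗ (TensorProduct.assoc ℂ A (T2 A) X).toLinearMap

/-- reassociation of four factors with a tail -/
def J4 : (T4 A) ⊗[ℂ] X →ₗ[ℂ] A ⊗[ℂ] (A ⊗[ℂ] (A ⊗[ℂ] (A ⊗[ℂ] X))) :=
  lt (J3 X) ∘ₗ (TensorProduct.assoc ℂ A (T3 A) X).toLinearMap

/-- reassociation of two factors with a tail -/
def J2 : (T2 A) ⊗[ℂ] X →ₗ[ℂ] A ⊗[ℂ] (A ⊗[ℂ] X) :=
  (TensorProduct.assoc ℂ A A X).toLinearMap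

variable {X}

theorem J2_tmul (a b : A) (t : X) : J2 X ((a ⊗ₜ b) ⊗ₜ[ℂ] t) = a ⊗ₜ (b ⊗ₜ t) := by
  simp [J2]

theorem J3_tmul (a : A) (b : T2 A) (t : X) : J3 X ((a ⊗ₜ b) ⊗ₜ[ℂ] t) = a ⊗ₜ J2 X (b ⊗ₜ t) := by
  simp [J3, J2]

theorem J4_tmul (a : A) (b : T3 A) (t : X) : J4 X ((a ⊗ₜ b) ⊗ₜ[ℂ] t) = a ⊗ₜ J3 X (b ⊗ₜ t) := by
  simp [J4]

theorem J3_assoc (y : T2 A) (c : A) (t : X) :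
    J3 X (TensorProduct.assoc ℂ A A A (y ⊗ₜ c) ⊗ₜ[ℂ] t) = J2 (A ⊗[ℂ] X) (y ⊗ₜ[ℂ] (c ⊗ₜ[ℂ] t)) := by
  induction y using TensorProduct.induction_on with
  | zero => simp
  | tmul a b => simp [J3_tmul, J2_tmul]
  | add x y hx hy => simp only [TensorProduct.add_tmul, map_add, hx, hy]

theorem J4_assoc (y : T2 A) (c : T2 A) (t : X) :
    J4 X (TensorProduct.assoc ℂ A A (T2 A) (y ⊗ₜ c) ⊗ₜ[ℂ] t)
      = J2 (A ⊗[ℂ] (A ⊗[ℂ] X)) (y ⊗ₜ[ℂ] (J2 X (c ⊗ₜ[ℂ] t))) := by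
  induction y using TensorProduct.induction_on with
  | zero => simp
  | tmul a b => simp [J4_tmul, J3_tmul, J2_tmul]
  | add x y hx hy => simp only [TensorProduct.add_tmul, map_add, hx, hy]

theorem D_J2 (f : T2 A →ₗ[ℂ] T2 A) (y : T2 A) (t : X) :
    D X f (J2 X (y ⊗ₜ t)) = J2 X (f y ⊗ₜ t) := by
  simp [D, J2]

theorem D_J3 (f : T2 A →ₗ[ℂ] T2 A) (y : T3 A) (t : X) :
    J3 X (op12 f y ⊗ₜ t) = D _ f (J3 X (y ⊗ₜ t)) := by
  induction y using TensorProduct.induction_on with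
  | zero => simp
  | add x y hx hy => simp only [TensorProduct.add_tmul, map_add, hx, hy]
  | tmul a y =>
    induction y using TensorProduct.induction_on with
    | zero => simp
    | add x y hx hy => simp only [TensorProduct.tmul_add, TensorProduct.add_tmul, map_add, hx, hy]
    | tmul b c =>
      rw [J3_tmul, J2_tmul, ← J2_tmul a b (c ⊗ₜ[ℂ] t), D_J2, ← J3_assoc]
      simp [op12]

theorem D_J4 (f : T2 A →ₗ[ℂ] T2 A) (y : T4 A) (t : X) :
    J4 X (op12_4 f y ⊗ₜ t) = D _ f (J4 X (y ⊗ₜ t)) := by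
  induction y using TensorProduct.induction_on with
  | zero => simp
  | add x y hx hy => simp only [TensorProduct.add_tmul, map_add, hx, hy]
  | tmul a y =>
    induction y using TensorProduct.induction_on with
    | zero => simp
    | add x y hx hy => simp only [TensorProduct.tmul_add, TensorProduct.add_tmul, map_add, hx, hy]
    | tmul b c =>
      rw [J4_tmul, J3_tmul, ← J2_tmul a b (J2 X (c ⊗ₜ[ℂ] t)), D_J2, ← J4_assoc]
      simp [op12_4]

theorem J3_lt {f : T2 A →ₗ[ℂ] T2 A} {F : A ⊗[ℂ] (A ⊗[ℂ] X) →ₗ[ℂ] A ⊗[ℂ] (A ⊗[ℂ] X)} {t : X}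
    (h : ∀ y, J2 X (f y ⊗ₜ t) = F (J2 X (y ⊗ₜ t))) (y : T3 A) :
    J3 X (f.lTensor A y ⊗ₜ t) = lt F (J3 X (y ⊗ₜ t)) := by
  induction y using TensorProduct.induction_on with
  | zero => simp
  | add x y hx hy => simp only [TensorProduct.add_tmul, map_add, hx, hy]
  | tmul a y => simp [J3_tmul, h]

theorem J4_lt {f : T3 A →ₗ[ℂ] T3 A}
    {F : A ⊗[ℂ] (A ⊗[ℂ] (A ⊗[ℂ] X)) →ₗ[ℂ] A ⊗[ℂ] (A ⊗[ℂ] (A ⊗[ℂ] X))} {t : X}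
    (h : ∀ y, J3 X (f y ⊗ₜ t) = F (J3 X (y ⊗ₜ t))) (y : T4 A) :
    J4 X (f.lTensor A y ⊗ₜ t) = lt F (J4 X (y ⊗ₜ t)) := by
  induction y using TensorProduct.induction_on with
  | zero => simp
  | add x y hx hy => simp only [TensorProduct.add_tmul, map_add, hx, hy]
  | tmul a y => simp [J4_tmul, h]

/-- shifting a map `T2 → T3` -/
theorem J34_lt {f : T2 A →ₗ[ℂ] T3 A}
    {F : A ⊗[ℂ] (A ⊗[ℂ] X) →ₗ[ℂ] A ⊗[ℂ] (A ⊗[ℂ] (A ⊗[ℂ] X))} {t : X}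
    (h : ∀ y, J3 X (f y ⊗ₜ t) = F (J2 X (y ⊗ₜ t))) (y : T3 A) :
    J4 X (f.lTensor A y ⊗ₜ t) = lt F (J3 X (y ⊗ₜ t)) := by
  induction y using TensorProduct.induction_on with
  | zero => simp
  | add x y hx hy => simp only [TensorProduct.add_tmul, map_add, hx, hy]
  | tmul a y => simp [J4_tmul, J3_tmul, h]

theorem Ph_J2 (f : A →ₗ[ℂ] T2 A) (y : T2 A) (t : X) :
    J3 X (((TensorProduct.assoc ℂ A A A).toLinearMap ∘ₗ f.rTensor A) y ⊗ₜ t)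
      = Ph _ f (J2 X (y ⊗ₜ t)) := by
  induction y using TensorProduct.induction_on with
  | zero => simp
  | add x y hx hy => simp only [TensorProduct.add_tmul, map_add, hx, hy]
  | tmul a b =>
    simp only [LinearMap.comp_apply, LinearMap.rTensor_tmul, LinearEquiv.coe_coe, J3_assoc, J2_tmul]
    simp [Ph, J2]

theorem Ph_J2' (f : A →ₗ[ℂ] T2 A) (y : T2 A) (t : X) :
    J3 X (f.lTensor A y ⊗ₜ t) = lt (Ph _ f) (J2 X (y ⊗ₜ t)) := by
  induction y using TensorProduct.induction_on with
  | zero => simp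
  | add x y hx hy => simp only [TensorProduct.add_tmul, map_add, hx, hy]
  | tmul a b =>
    simp [J3_tmul, J2, Ph]

theorem Ep_J3 (f : A →ₗ[ℂ] ℂ) (y : T3 A) (t : X) :
    J2 X ((((TensorProduct.rid ℂ A).toLinearMap ∘ₗ f.lTensor A).lTensor A) y ⊗ₜ t)
      = lt (lt (Ep X f)) (J3 X (y ⊗ₜ t)) := by
  induction y using TensorProduct.induction_on with
  | zero => simp
  | add x y hx hy => simp only [TensorProduct.add_tmul, map_add, hx, hy]
  | tmul a y =>
    induction y using TensorProduct.induction_on with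
    | zero => simp
    | add x y hx hy => simp only [TensorProduct.tmul_add, TensorProduct.add_tmul, map_add, hx, hy]
    | tmul b c =>
      simp only [J3_tmul, J2_tmul, Ep, LinearMap.lTensor_tmul, LinearMap.comp_apply,
        LinearEquiv.coe_coe, TensorProduct.rid_tmul, LinearMap.rTensor_tmul, TensorProduct.lid_tmul]
      rw [TensorProduct.smul_tmul]

theorem J2_ext {Y : Type w} [AddCommMonoid Y] [Module ℂ Y]
    {F G : A ⊗[ℂ] (A ⊗[ℂ] X) →ₗ[ℂ] Y}
    (h : ∀ (y : T2 A) (t : X), F (J2 X (y ⊗ₜ t)) = G (J2 X (y ⊗ₜ t))) : F = G := by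
  ext a b t
  have := h (a ⊗ₜ b) t
  rw [J2_tmul] at this
  simpa using this

theorem J3_inj {x y : T3 A} (h : J3 ℂ (x ⊗ₜ (1:ℂ)) = J3 ℂ (y ⊗ₜ (1:ℂ))) : x = y := by
  have h1 : ∀ x : T3 A, lt (lt (TensorProduct.rid ℂ A).toLinearMap) (J3 ℂ (x ⊗ₜ (1:ℂ))) = x := by
    intro y
    induction y using TensorProduct.induction_on with
    | zero => simp
    | add x y hx hy => simp only [TensorProduct.add_tmul, map_add, hx, hy]
    | tmul a y =>
      induction y using TensorProduct.induction_on with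
      | zero => simp
      | add x y hx hy => simp only [TensorProduct.tmul_add, TensorProduct.add_tmul, map_add, hx, hy]
      | tmul b c => simp [J3_tmul, J2_tmul]
  rw [← h1 x, ← h1 y, h]

end conv

section axs
variable (G : BQG A) {X : Type v} [AddCommMonoid X] [Module ℂ X]

theorem MC : D _ G.σ ∘ₗ lt (Ph _ G.φ) ∘ₗ D _ G.σ' ∘ₗ lt (Ph X G.φ)
    = lt (lt (D _ G.σ)) ∘ₗ lt (Ph _ G.φ) ∘ₗ lt (D _ G.σ') ∘ₗ Ph (A ⊗[ℂ] X) G.φ := by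
  apply J2_ext
  intro y t
  have h := congrArg (fun z => J4 X (z ⊗ₜ[ℂ] t)) (LinearMap.congr_fun G.mixed_coassoc y)
  simp only [LinearMap.comp_apply, LinearEquiv.coe_coe] at h ⊢
  rw [D_J4, J34_lt (Ph_J2 G.φ · t), D_J3, Ph_J2'] at h
  rw [h, op34_4, J4_lt (J3_lt fun y => (D_J2 G.σ y t).symm), J34_lt (Ph_J2 G.φ · t), op23,
    J3_lt fun y => (D_J2 G.σ' y t).symm, ← Ph_J2]
  rfl

theorem Dss (x) : D X G.σ (D X G.σ' x) = x := by
  have : D X G.σ ∘ₗ D X G.σ' = LinearMap.id := by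
    apply J2_ext
    intro y t
    simp only [LinearMap.comp_apply, D_J2, LinearMap.id_apply]
    rw [← LinearMap.comp_apply, G.σ_comp]; rfl
  exact LinearMap.congr_fun this x

theorem Dss' (x) : D X G.σ' (D X G.σ x) = x := by
  have : D X G.σ' ∘ₗ D X G.σ = LinearMap.id := by
    apply J2_ext
    intro y t
    simp only [LinearMap.comp_apply, D_J2, LinearMap.id_apply]
    rw [← LinearMap.comp_apply, G.comp_σ]; rfl
  exact LinearMap.congr_fun this x

theorem Ph_J1 (a : A) (t : X) : Ph X G.φ (a ⊗ₜ t) = J2 X (G.φ a ⊗ₜ t) := by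
  simp [Ph, J2]

theorem coas (x : A ⊗[ℂ] X) : Ph _ G.φ (Ph X G.φ x) = lt (Ph X G.φ) (Ph X G.φ x) := by
  have : Ph _ G.φ ∘ₗ Ph X G.φ = lt (Ph X G.φ) ∘ₗ Ph X G.φ := by
    apply TensorProduct.ext'
    intro a t
    simp only [LinearMap.comp_apply, Ph_J1]
    rw [← Ph_J2', ← Ph_J2]
    congr 2
    exact LinearMap.congr_fun G.coassoc a
  exact LinearMap.congr_fun this x

theorem coul (x : A ⊗[ℂ] X) : Ep _ G.ε (Ph X G.φ x) = x := by
  have : Ep _ G.ε ∘ₗ Ph X G.φ = LinearMap.id := by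
    apply TensorProduct.ext'
    intro a t
    simp only [LinearMap.comp_apply, Ph_J1]
    have h : ∀ y : T2 A, Ep _ G.ε (J2 X (y ⊗ₜ t))
        = ((TensorProduct.lid ℂ A).toLinearMap ∘ₗ G.ε.rTensor A) y ⊗ₜ t := by
      intro y
      induction y using TensorProduct.induction_on with
      | zero => simp
      | add x y hx hy => simp only [TensorProduct.add_tmul, map_add, hx, hy]
      | tmul a b => simp [J2_tmul, Ep, TensorProduct.smul_tmul']
    rw [h]
    exact congrArg (· ⊗ₜ[ℂ] t) (LinearMap.congr_fun G.counit_left a)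
  exact LinearMap.congr_fun this x

theorem cour (x : A ⊗[ℂ] X) : lt (Ep _ G.ε) (Ph X G.φ x) = x := by
  have : lt (Ep _ G.ε) ∘ₗ Ph X G.φ = LinearMap.id := by
    apply TensorProduct.ext'
    intro a t
    simp only [LinearMap.comp_apply, Ph_J1]
    have h : ∀ y : T2 A, lt (Ep _ G.ε) (J2 X (y ⊗ₜ t))
        = ((TensorProduct.rid ℂ A).toLinearMap ∘ₗ G.ε.lTensor A) y ⊗ₜ t := by
      intro y
      induction y using TensorProduct.induction_on with
      | zero => simp
      | add x y hx hy => simp only [TensorProduct.add_tmul, map_add, hx, hy]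
      | tmul a b => simp [J2_tmul, Ep, TensorProduct.smul_tmul']
    rw [h]
    exact congrArg (· ⊗ₜ[ℂ] t) (LinearMap.congr_fun G.counit_right a)
  exact LinearMap.congr_fun this x

theorem antl (x : A ⊗[ℂ] X) : Mu X (Ka _ G.κ (Ph X G.φ x)) = Et X (Ep X G.ε x) := by
  have : Mu X ∘ₗ Ka _ G.κ ∘ₗ Ph X G.φ = Et X ∘ₗ Ep X G.ε := by
    apply TensorProduct.ext'
    intro a t
    simp only [LinearMap.comp_apply, Ph_J1]
    have h : ∀ y : T2 A, Mu X (Ka _ G.κ (J2 X (y ⊗ₜ t)))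
        = (mA ∘ₗ G.κ.rTensor A) y ⊗ₜ t := by
      intro y
      induction y using TensorProduct.induction_on with
      | zero => simp
      | add x y hx hy => simp only [TensorProduct.add_tmul, map_add, hx, hy]
      | tmul a b => simp [J2_tmul, Mu, Ka]
    rw [h]
    refine (congrArg (· ⊗ₜ[ℂ] t) (LinearMap.congr_fun G.antipode_left a)).trans ?_
    simp [Et, Ep, Algebra.algebraMap_eq_smul_one, TensorProduct.smul_tmul']
  exact LinearMap.congr_fun this x

theorem antr (x : A ⊗[ℂ] X) : Mu X (lt (Ka _ G.κ) (Ph X G.φ x)) = Et X (Ep X G.ε x) := by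
  have : Mu X ∘ₗ lt (Ka _ G.κ) ∘ₗ Ph X G.φ = Et X ∘ₗ Ep X G.ε := by
    apply TensorProduct.ext'
    intro a t
    simp only [LinearMap.comp_apply, Ph_J1]
    have h : ∀ y : T2 A, Mu X (lt (Ka _ G.κ) (J2 X (y ⊗ₜ t)))
        = (mA ∘ₗ G.κ.lTensor A) y ⊗ₜ t := by
      intro y
      induction y using TensorProduct.induction_on with
      | zero => simp
      | add x y hx hy => simp only [TensorProduct.add_tmul, map_add, hx, hy]
      | tmul a b => simp [J2_tmul, Mu, Ka]
    rw [h]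
    refine (congrArg (· ⊗ₜ[ℂ] t) (LinearMap.congr_fun G.antipode_right a)).trans ?_
    simp [Et, Ep, Algebra.algebraMap_eq_smul_one, TensorProduct.smul_tmul']
  exact LinearMap.congr_fun this x

theorem mm_J4 (y : T4 A) (t : X) :
    J2 X (mm y ⊗ₜ t) = Mu _ (lt (lt (Mu X)) (J4 X (y ⊗ₜ t))) := by
  have : J2 X ∘ₗ (mm (A := A)).rTensor X = Mu _ ∘ₗ lt (lt (Mu X)) ∘ₗ J4 X := by
    ext a b c d t
    simp [mm, m12, J4_tmul, J3_tmul, J2_tmul, Mu]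
  simpa using LinearMap.congr_fun this (y ⊗ₜ t)

theorem comm (x : A ⊗[ℂ] (A ⊗[ℂ] X)) : Ph X G.φ (Mu X x) =
    Mu _ (lt (lt (Mu X)) (lt (D _ G.σ) (Ph _ G.φ (lt (Ph X G.φ) x)))) := by
  have : Ph X G.φ ∘ₗ Mu X =
    Mu _ ∘ₗ (lt (lt (Mu X)) ∘ₗ (lt (D _ G.σ) ∘ₗ (Ph _ G.φ ∘ₗ (lt (Ph X G.φ))))) := by
    apply J2_ext
    intro y t
    have h1 : Mu X (J2 X (y ⊗ₜ t)) = mA y ⊗ₜ t := by simp [Mu, J2]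
    simp only [LinearMap.comp_apply, h1, Ph_J1]
    have h := congrArg (fun z => J2 X (z ⊗ₜ[ℂ] t)) (LinearMap.congr_fun G.comul_mul y)
    simp only [LinearMap.comp_apply] at h
    rw [h, mm_J4, op23_4, J4_lt (fun y => D_J3 G.σ y t)]
    congr 3
    clear h h1
    induction y using TensorProduct.induction_on with
    | zero => simp
    | add x y hx hy => simp only [TensorProduct.add_tmul, map_add, hx, hy]
    | tmul a b =>
      simp only [LinearMap.lTensor_tmul, LinearMap.rTensor_tmul, LinearEquiv.coe_coe, J4_assoc,
        J2_tmul, Ph_J1]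
  exact LinearMap.congr_fun this x

end axs


section helpers
variable {X : Type*} [AddCommMonoid X] [Module ℂ X] {Y : Type*} [AddCommMonoid Y] [Module ℂ Y]
  {Z : Type*} [AddCommMonoid Z] [Module ℂ Z] {W : Type*} [AddCommMonoid W] [Module ℂ W]
  {V : Type*} [AddCommMonoid V] [Module ℂ V]

theorem L20 {f : Y →ₗ[ℂ] X} {g : X →ₗ[ℂ] Y} (H : ∀ x, f (g x) = x) (x : A ⊗[ℂ] X) :
    lt f (lt g x) = x := by
  rw [lt_comp, show f ∘ₗ g = LinearMap.id from LinearMap.ext H]; simp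

theorem L21 {f : Y →ₗ[ℂ] Z} {g : X →ₗ[ℂ] Y} {k : X →ₗ[ℂ] Z}
    (H : ∀ x, f (g x) = k x) (x : A ⊗[ℂ] X) : lt f (lt g x) = lt k x := by
  rw [lt_comp, show f ∘ₗ g = k from LinearMap.ext H]

theorem L22 {f : Y →ₗ[ℂ] Z} {g : X →ₗ[ℂ] Y} {k : W →ₗ[ℂ] Z} {l : X →ₗ[ℂ] W}
    (H : ∀ x, f (g x) = k (l x)) (x : A ⊗[ℂ] X) : lt f (lt g x) = lt k (lt l x) := by
  rw [lt_comp, lt_comp, show f ∘ₗ g = k ∘ₗ l from LinearMap.ext H]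

theorem L23 {f : Y →ₗ[ℂ] Z} {g : X →ₗ[ℂ] Y} {k : W →ₗ[ℂ] Z} {l : V →ₗ[ℂ] W} {m : X →ₗ[ℂ] V}
    (H : ∀ x, f (g x) = k (l (m x))) (x : A ⊗[ℂ] X) :
    lt f (lt g x) = lt k (lt l (lt m x)) := by
  rw [lt_comp, lt_comp, lt_comp, show f ∘ₗ g = k ∘ₗ l ∘ₗ m from LinearMap.ext H]
  rfl

theorem L32 {f : Y →ₗ[ℂ] Z} {g : X →ₗ[ℂ] Y} {k : W →ₗ[ℂ] Z} {l : V →ₗ[ℂ] W} {m : X →ₗ[ℂ] V}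
    (H : ∀ x, k (l (m x)) = f (g x)) (x : A ⊗[ℂ] X) :
    lt k (lt l (lt m x)) = lt f (lt g x) := (L23 (fun x => (H x).symm) x).symm

theorem L33 {T : Type*} [AddCommMonoid T] [Module ℂ T] {T' : Type*} [AddCommMonoid T'] [Module ℂ T']
    {f : Y →ₗ[ℂ] Z} {g : T →ₗ[ℂ] Y} {r : X →ₗ[ℂ] T} {k : W →ₗ[ℂ] Z} {l : T' →ₗ[ℂ] W}
    {m : X →ₗ[ℂ] T'} (H : ∀ x, f (g (r x)) = k (l (m x))) (x : A ⊗[ℂ] X) :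
    lt f (lt g (lt r x)) = lt k (lt l (lt m x)) := by
  simp only [lt_comp]
  rw [show f ∘ₗ g ∘ₗ r = k ∘ₗ l ∘ₗ m from LinearMap.ext H]

end helpers

section main
variable (G : BQG A) {X : Type v} [AddCommMonoid X] [Module ℂ X]

local notation "S" => D _ (BQG.σ G)
local notation "Φ" => Ph _ (BQG.φ G)
local notation "E" => Ep _ (BQG.ε G)
local notation "Si" => D _ (BQG.σ' G)

variable (X) in
def U : (A ⊗[ℂ] (A ⊗[ℂ] X)) →ₗ[ℂ] (A ⊗[ℂ] (A ⊗[ℂ] X)) :=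
  lt (lt E) ∘ₗ lt S ∘ₗ Φ ∘ₗ Si

variable (X) in
def P : (A ⊗[ℂ] (A ⊗[ℂ] X)) →ₗ[ℂ] (A ⊗[ℂ] (A ⊗[ℂ] X)) :=
  lt (lt E) ∘ₗ lt Si ∘ₗ Φ

variable (X) in
def K : (A ⊗[ℂ] (A ⊗[ℂ] X)) →ₗ[ℂ] (A ⊗[ℂ] (A ⊗[ℂ] X)) :=
  lt E ∘ₗ lt S ∘ₗ lt (U G X) ∘ₗ Φ

variable (X) in
def h : (A ⊗[ℂ] (A ⊗[ℂ] X)) →ₗ[ℂ] X := E ∘ₗ Mu X ∘ₗ U G X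

theorem U_apply (x) : U G X x = lt (lt E) (lt S (Φ (Si x))) := rfl
theorem P_apply (x) : P G X x = lt (lt E) (lt Si (Φ x)) := rfl
theorem K_apply (x) : K G X x = lt E (lt S (lt (U G X) (Φ x))) := rfl
theorem h_apply (x) : h G X x = E (Mu X (U G X x)) := rfl

theorem U_nat {Y : Type w} [AddCommMonoid Y] [Module ℂ Y] (g : X →ₗ[ℂ] Y) (x) :
    U G Y (lt (lt g) x) = lt (lt g) (U G X x) := by
  simp only [U_apply, D_nat, Ph_nat]
  rw [L22 (D_nat G.σ g), L22 (L22 (Ep_nat G.ε g))]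

theorem h_nat {Y : Type w} [AddCommMonoid Y] [Module ℂ Y] (g : X →ₗ[ℂ] Y) (x) :
    h G Y (lt (lt g) x) = g (h G X x) := by
  simp only [h_apply, U_nat, Mu_nat, Ep_nat]

/-- mixed coassociativity, elementwise -/
theorem MC' (x : A ⊗[ℂ] (A ⊗[ℂ] X)) :
    S (lt Φ (Si (lt Φ x))) = lt (lt S) (lt Φ (lt Si (Φ x))) :=
  LinearMap.congr_fun (MC G) x

theorem E4 (x : A ⊗[ℂ] (A ⊗[ℂ] X)) : S (lt Φ (Si x)) = lt (U G X) (Φ x) := by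
  have H := congrArg (lt (lt (lt E))) (MC' G x)
  have e2 : lt (lt (lt E)) (lt Φ (Si (lt Φ x))) = lt Φ (Si x) := by
    rw [← L22 (Ph_nat G.φ (Ep _ G.ε)), ← D_nat, L20 (cour G)]
  rw [← D_nat, e2] at H
  rw [H]
  simp only [U, LinearMap.lTensor_comp, LinearMap.comp_apply]

theorem E4s (x : A ⊗[ℂ] (A ⊗[ℂ] X)) : S (lt Φ x) = lt (U G X) (Φ (S x)) := by
  rw [← E4, Dss']

theorem E4i (x : A ⊗[ℂ] (A ⊗[ℂ] X)) : lt Φ (Si x) = Si (lt (U G X) (Φ x)) := by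
  rw [← E4, Dss']

theorem U2 (x : A ⊗[ℂ] (A ⊗[ℂ] X)) : E (S (lt Φ (Si x))) = U G X x := by
  rw [E4, Ep_nat, coul]

theorem E1 (x : A ⊗[ℂ] (A ⊗[ℂ] X)) : lt S (Φ (Si x)) = U G _ (lt Φ x) := by
  have H := congrArg E (MC' G x)
  rw [U2, Ep_nat, Ep_nat, Ep_nat, coul] at H
  exact H.symm

theorem E1s (x : A ⊗[ℂ] (A ⊗[ℂ] X)) : lt S (Φ x) = U G _ (lt Φ (S x)) := by
  rw [← E1, Dss']

theorem ltE_U (x : A ⊗[ℂ] (A ⊗[ℂ] X)) : lt E (U G X x) = E x := by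
  rw [← U2, ← Ep_nat, ← D_nat, L20 (cour G), Dss]

theorem Zr (x : A ⊗[ℂ] (A ⊗[ℂ] X)) : lt E (lt S (Φ x)) = Φ (E (S x)) := by
  rw [E1s, ltE_U, Ep_nat]

theorem cancel {Y : Type w} [AddCommMonoid Y] [Module ℂ Y]
    (F : (A ⊗[ℂ] Y) →ₗ[ℂ] (A ⊗[ℂ] X)) (x : A ⊗[ℂ] Y) :
    Mu X (Ka _ G.κ (lt (Mu X ∘ₗ lt F ∘ₗ Φ) (Φ x))) = F x := by
  simp only [LinearMap.lTensor_comp, LinearMap.comp_apply]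
  rw [← coas, Ka_nat, Mu_assoc, Ka_nat, Mu_nat, antl, Et_nat, Mu_Et, coul]

theorem hL' (x : A ⊗[ℂ] (A ⊗[ℂ] X)) : lt (h G X) (Φ (S x)) = E x := by
  have H : Mu X ∘ₗ lt (lt (h G X) ∘ₗ Φ ∘ₗ S) ∘ₗ Φ = Mu X ∘ₗ lt E ∘ₗ Φ := by
    apply LinearMap.ext
    intro y
    simp only [LinearMap.comp_apply]
    rw [cour]
    conv_rhs => rw [← cour G (Mu X y), comm, ← Mu_nat, Ph_nat, L23 (E4s G)]
    simp only [h, LinearMap.lTensor_comp, LinearMap.comp_apply]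
  have h1 := cancel G (lt (h G X) ∘ₗ Φ ∘ₗ S) x
  rw [H, cancel] at h1
  exact h1.symm

theorem hL (x : A ⊗[ℂ] (A ⊗[ℂ] X)) : lt (h G X) (Φ x) = E (Si x) := by
  rw [← hL', Dss]

variable (X) in
def G0 : (A ⊗[ℂ] (A ⊗[ℂ] X)) →ₗ[ℂ] (A ⊗[ℂ] X) := h G _ ∘ₗ lt Φ ∘ₗ S

theorem G0_apply (x) : G0 G X x = h G _ (lt Φ (S x)) := rfl

theorem G0_nat {Y : Type w} [AddCommMonoid Y] [Module ℂ Y] (g : X →ₗ[ℂ] Y) (x) :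
    G0 G Y (lt (lt g) x) = lt g (G0 G X x) := by
  rw [G0_apply, D_nat, L22 (Ph_nat G.φ g), h_nat, G0_apply]

theorem G0_mu (y : A ⊗[ℂ] (A ⊗[ℂ] X)) : Mu X (G0 G _ (lt Φ y)) = Mu X y := by
  conv_rhs => rw [← coul G (Mu X y), comm, Mu_nat, Ep_nat, E1s]
  rfl

theorem hR' (x : A ⊗[ℂ] (A ⊗[ℂ] X)) : G0 G X x = lt E x := by
  have H := congrArg (fun z => Mu X (lt (Ka X G.κ) z)) (G0_mu G (lt (Ph X G.φ) x))
  rw [← Mu_nat, ← Mu_nat, ← Mu_assoc, ← Mu_assoc, L32 (antr G), Mu_lt_Et, ← G0_nat, ← G0_nat,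
    L22 (coas G), L32 (L32 (antr G)), L20 (cour G), G0_nat, Mu_lt_Et] at H
  exact H

theorem hR (x : A ⊗[ℂ] (A ⊗[ℂ] X)) : h G _ (lt Φ x) = lt E (Si x) := by
  rw [← hR', G0_apply, Dss]

theorem hs (x : A ⊗[ℂ] (A ⊗[ℂ] X)) : h G X (S x) = E (E x) := by
  rw [← hL', Ep_nat, coul]

theorem PR (x : A ⊗[ℂ] (A ⊗[ℂ] X)) : P G X x = E (Si (lt Φ x)) := by
  rw [P_apply, ← L22 (hR G), ← Ph_nat, hL]

theorem hex (x : A ⊗[ℂ] (A ⊗[ℂ] X)) : Φ (U G X x) = lt (U G X) (U G _ (lt Φ x)) := by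
  rw [← E1, U_apply, Ph_nat, Ph_nat, coas]
  simp only [U, LinearMap.lTensor_comp, LinearMap.comp_apply]
  rw [L20 (Dss' G)]

theorem UP (x : A ⊗[ℂ] (A ⊗[ℂ] X)) : U G X (P G X x) = Si x := by
  conv_rhs => rw [← L20 (coul G) (D X G.σ' x), E4i, ← hR, L23 (hex G), h_nat, ← Ph_nat, ← E4, hs,
    Ep_nat, coul, ← PR]

theorem Ph_P (x : A ⊗[ℂ] (A ⊗[ℂ] X)) : Φ (P G X x) = lt (P G X) (Φ x) := by
  rw [P_apply, Ph_nat, Ph_nat, coas]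
  simp only [P, LinearMap.lTensor_comp, LinearMap.comp_apply]

theorem KP (x : A ⊗[ℂ] (A ⊗[ℂ] X)) : K G X (P G X x) = x := by
  rw [K_apply, Ph_P, L21 (UP G), L20 (Dss G), cour]

theorem Kcomm (x : A ⊗[ℂ] (A ⊗[ℂ] X)) : lt (K G X) (Si (lt Φ x)) = Si (lt Φ (K G X x)) := by
  rw [K_apply]
  simp only [K, LinearMap.lTensor_comp, LinearMap.comp_apply]
  rw [E4i, ← D_nat, ← D_nat, ← D_nat, Ph_nat, ← L23 (hex G), L33 (Zr G)]

theorem PK (x : A ⊗[ℂ] (A ⊗[ℂ] X)) : P G X (K G X x) = x := by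
  rw [PR, ← Kcomm, Ep_nat, ← PR, KP]

theorem PsU (x : A ⊗[ℂ] (A ⊗[ℂ] X)) : P G X (S (U G X x)) = x := by
  conv_lhs => rw [← PK G x, UP, Dss, PK]

theorem final (x : A ⊗[ℂ] (A ⊗[ℂ] X)) : Φ (S x) = lt (P G X) (lt S (S (lt Φ x))) := by
  rw [E4s, L32 (g := LinearMap.id) (f := LinearMap.id) (PsU G)]; simp

theorem tau_J2 (y : T2 A) (t : X) : J2 X (G.τ y ⊗ₜ t) = (P G X ∘ₗ S) (J2 X (y ⊗ₜ t)) := by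
  simp only [BQG.τ, BQG.ε3r, BQG.φ1, op23, LinearMap.comp_apply, P_apply, D_J2]
  rw [Ep_J3, J3_lt fun y => (D_J2 G.σ' y t).symm, ← Ph_J2]
  rfl

end main

end BQGaux

/-- Pentagonal twisting relation `(φ⊗id)σ = (id⊗τ)(σ⊗id)(id⊗φ)`. -/
theorem bqg_pentagon_1 {A : Type*} [Ring A] [Algebra ℂ A] (G : BQG A) :
    G.φ1 ∘ₗ G.σ = op23 G.τ ∘ₗ op12 G.σ ∘ₗ G.φ2 := by
  apply LinearMap.ext
  intro y
  apply BQGaux.J3_inj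
  simp only [BQG.φ1, BQG.φ2, LinearMap.comp_apply, op23]
  rw [BQGaux.J3_lt fun y => BQGaux.tau_J2 G y (1:ℂ), BQGaux.D_J3, BQGaux.Ph_J2']
  rw [BQGaux.lt, LinearMap.lTensor_comp, LinearMap.comp_apply, ← BQGaux.final, BQGaux.D_J2,
    ← BQGaux.Ph_J2]
  rfl
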